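/- Let K be an algebraically closed field of characteristic 0, let f and g be nonconstant, relatively prime polynomials in K[t], set A = f² − g², B = 2fg, C = f² + g², and let w ∈ K[t] be a nonconstant polynomial. Suppose (x, y, z) is a solution in positive integers of (wA)^x + (wB)^y = (wC)^z with x < m, where m = min{y, z}. Then, writing δ(p) for the degree of a polynomial p: x·δ(A) < δ(A) + δ(B) + δ(C) + m·δ(w) − 1, y·δ(B) ≤ δ(A) + δ(B) + δ(C) − 1, and z·δ(C) ≤ δ(A) + δ(B) + δ(C) − 1. -/

import Mathlib

open Polynomial

/-!
Put `m = min y z`. Since `x < m`, the factor `w ^ m` divides all three terms of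
`(w * A) ^ x + (w * B) ^ y = (w * C) ^ z`, and cancelling it leaves
`a + w ^ (y - m) * B ^ y = w ^ (z - m) * C ^ z` with `a * w ^ (m - x) = A ^ x`. Both `w` and `a`
divide `A ^ x`, so every prime factor of the new terms divides `A * B * C`. As `a` is coprime to `B`
and `C`, and one of `y - m`, `z - m` vanishes, the new terms are coprime. By the Mason–Stothers
theorem each of them has degree less than that of `A * B * C`.
-/

section Coprime

variable {R : Type*} [CommRing R] {f g p q : R}

theorem isCoprime_sub_add (h2 : IsUnit (2 : R)) (h : IsCoprime p q) :
    IsCoprime (p - q) (p + q) := by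
  obtain ⟨t, ht⟩ := h2.exists_right_inv
  obtain ⟨u, v, huv⟩ := h
  exact ⟨t * (u - v), t * (u + v), by linear_combination 2 * t * huv + ht⟩

theorem isCoprime_sq_sub_sq_two_mul_mul (h2 : IsUnit (2 : R)) (h : IsCoprime f g) :
    IsCoprime (f ^ 2 - g ^ 2) (2 * f * g) := by
  have hf : IsCoprime (f ^ 2 - g ^ 2) f := by
    simpa [sq, sub_eq_neg_add] using (h.symm.pow_left (m := 2)).neg_left.add_mul_left_left f
  have hg : IsCoprime (f ^ 2 - g ^ 2) g := by
    simpa [sq, sub_eq_add_neg] using (h.pow_left (m := 2)).add_mul_left_left (-g)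
  rw [mul_assoc]
  exact (isCoprime_mul_unit_left_right h2 _ _).mpr (hf.mul_right hg)

theorem sq_sub_sq_ne_zero_of_isCoprime (hf : ¬IsUnit f) (h : IsCoprime f g) :
    f ^ 2 - g ^ 2 ≠ 0 := by
  intro h0
  have hsq : IsCoprime (f ^ 2) (f ^ 2) := by
    simpa only [← sub_eq_zero.mp h0] using h.pow (m := 2) (n := 2)
  exact hf ((isUnit_pow_iff two_ne_zero).mp (isCoprime_self.mp hsq))

theorem isCoprime_mul_pow_of_add_eq {A B C w a : R} {x y z i j : ℕ} (hAB : IsCoprime A B)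
    (hAC : IsCoprime A C) (hij : i = 0 ∨ j = 0) (ha : a ∣ A ^ x)
    (hsum : a + w ^ i * B ^ y = w ^ j * C ^ z) : IsCoprime a (w ^ i * B ^ y) := by
  rcases hij with rfl | rfl
  · simpa only [pow_zero, one_mul] using hAB.pow.of_isCoprime_of_dvd_left ha
  · have haC : IsCoprime a (C ^ z) := hAC.pow.of_isCoprime_of_dvd_left ha
    rw [pow_zero, one_mul] at hsum
    rw [← hsum, add_comm] at haC
    exact IsCoprime.of_add_mul_left_right (z := 1) (by rwa [mul_one])

end Coprime

theorem exists_add_eq_of_mul_pow_add_mul_pow_eq {R : Type*} [CommRing R] [NoZeroDivisors R]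
    {A B C w : R} {x y z m : ℕ} (hw : w ≠ 0) (hx : x ≤ m) (hy : m ≤ y) (hz : m ≤ z)
    (heq : (w * A) ^ x + (w * B) ^ y = (w * C) ^ z) :
    ∃ a, a * w ^ (m - x) = A ^ x ∧ a + w ^ (y - m) * B ^ y = w ^ (z - m) * C ^ z := by
  refine ⟨w ^ (z - m) * C ^ z - w ^ (y - m) * B ^ y, mul_left_cancel₀ (pow_ne_zero x hw) ?_,
    sub_add_cancel _ _⟩
  have split {n : ℕ} (hn : m ≤ n) : w ^ n = w ^ (n - m) * w ^ (m - x) * w ^ x := by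
    rw [← pow_add, ← pow_add]
    congr 1
    omega
  rw [mul_pow, mul_pow, mul_pow, split hy, split hz] at heq
  linear_combination -heq

theorem natDegree_pos_of_dvd_pow {R : Type*} [Semiring R] [NoZeroDivisors R] {u v : R[X]} {n : ℕ}
    (hv : v ≠ 0) (hu : 0 < u.natDegree) (h : u ∣ v ^ n) : 0 < v.natDegree := by
  have hpow : 0 < (v ^ n).natDegree := hu.trans_le (natDegree_le_of_dvd h (pow_ne_zero n hv))
  rw [natDegree_pow] at hpow
  exact Nat.pos_of_mul_pos_left hpow

section Polynomial

variable {K : Type*} [Field K] [CharZero K]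

open UniqueFactorizationMonoid UniqueFactorizationDomain in
theorem natDegree_lt_of_add_eq_of_prime_dvd {a b c p : K[X]} (hp : 0 < p.natDegree)
    (habc : a * b * c ≠ 0) (hab : IsCoprime a b) (hsum : a + b = c)
    (hprime : ∀ q, Prime q → q ∣ a * b * c → q ∣ p) :
    a.natDegree < p.natDegree ∧ b.natDegree < p.natDegree ∧ c.natDegree < p.natDegree := by
  classical
  have hp0 : p ≠ 0 := ne_zero_of_natDegree_gt hp
  have hrad : (radical (a * b * -c)).natDegree ≤ p.natDegree := by
    rw [mul_neg, radical_neg]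
    refine natDegree_le_of_dvd ((radical_dvd_iff_primeFactors_subset hp0).mpr fun q hq => ?_) hp0
    rw [mem_primeFactors, mem_normalizedFactors_iff' habc] at hq
    rw [mem_primeFactors, mem_normalizedFactors_iff' hp0]
    exact ⟨hq.1, hq.2.1, hprime q hq.1.prime hq.2.2⟩
  have ha : a ≠ 0 := left_ne_zero_of_mul (left_ne_zero_of_mul habc)
  have hb : b ≠ 0 := right_ne_zero_of_mul (left_ne_zero_of_mul habc)
  have hc : c ≠ 0 := right_ne_zero_of_mul habc
  have hsum0 : a + b + -c = 0 := by rw [hsum, add_neg_cancel]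
  rcases Polynomial.abc ha hb (neg_ne_zero.mpr hc) hab hsum0 with h | h
  · rw [natDegree_neg] at h
    omega
  · simp only [derivative_eq_zero, natDegree_neg] at h
    omega

theorem natDegree_lt_of_add_mul_pow_eq {A B C w a : K[X]} {x y z i j : ℕ}
    (hABC : 0 < (A * B * C).natDegree) (hAB : IsCoprime A B) (hAC : IsCoprime A C)
    (hij : i = 0 ∨ j = 0) (haA : a ∣ A ^ x) (hwA : w ∣ A ^ x)
    (hsum : a + w ^ i * B ^ y = w ^ j * C ^ z) :
    a.natDegree < (A * B * C).natDegree ∧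
      (w ^ i * B ^ y).natDegree < (A * B * C).natDegree ∧
      (w ^ j * C ^ z).natDegree < (A * B * C).natDegree := by
  have hABC0 : A * B * C ≠ 0 := ne_zero_of_natDegree_gt hABC
  have hAx : A ^ x ≠ 0 := pow_ne_zero x (left_ne_zero_of_mul (left_ne_zero_of_mul hABC0))
  have ha : a ≠ 0 := ne_zero_of_dvd_ne_zero hAx haA
  have hw : w ≠ 0 := ne_zero_of_dvd_ne_zero hAx hwA
  have hB : B ≠ 0 := right_ne_zero_of_mul (left_ne_zero_of_mul hABC0)
  have hC : C ≠ 0 := right_ne_zero_of_mul hABC0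
  refine natDegree_lt_of_add_eq_of_prime_dvd hABC ?_
    (isCoprime_mul_pow_of_add_eq hAB hAC hij haA hsum) hsum fun q hq hdvd => ?_
  · exact mul_ne_zero (mul_ne_zero ha (mul_ne_zero (pow_ne_zero _ hw) (pow_ne_zero _ hB)))
      (mul_ne_zero (pow_ne_zero _ hw) (pow_ne_zero _ hC))
  · have hqw {n : ℕ} (h : q ∣ w ^ n) : q ∣ A :=
      hq.dvd_of_dvd_pow ((hq.dvd_of_dvd_pow h).trans hwA)
    simp only [hq.dvd_mul] at hdvd ⊢
    rcases hdvd with (h | h | h) | h | h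
    · exact .inl (.inl (hq.dvd_of_dvd_pow (h.trans haA)))
    · exact .inl (.inl (hqw h))
    · exact .inl (.inr (hq.dvd_of_dvd_pow h))
    · exact .inl (.inl (hqw h))
    · exact .inr (hq.dvd_of_dvd_pow h)

end Polynomial

theorem jesmanowicz_poly_noncoprime_bounds_x_general {K : Type*} [Field K] [CharZero K]
    {A B C w : K[X]} (hA : A ≠ 0) (hAB : IsCoprime A B) (hAC : IsCoprime A C)
    (hw : 0 < w.natDegree) {x y z : ℕ} (hx : 0 < x)
    (heq : (w * A) ^ x + (w * B) ^ y = (w * C) ^ z) (hlt : x < min y z) :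
    x * A.natDegree < A.natDegree + B.natDegree + C.natDegree + min y z * w.natDegree - 1 ∧
      y * B.natDegree ≤ A.natDegree + B.natDegree + C.natDegree - 1 ∧
      z * C.natDegree ≤ A.natDegree + B.natDegree + C.natDegree - 1 := by
  obtain ⟨a, ha, hsum⟩ := exists_add_eq_of_mul_pow_add_mul_pow_eq (ne_zero_of_natDegree_gt hw)
    hlt.le (min_le_left y z) (min_le_right y z) heq
  have hw0 : w ≠ 0 := ne_zero_of_natDegree_gt hw
  have ha0 : a ≠ 0 := left_ne_zero_of_mul (ha ▸ pow_ne_zero x hA)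
  have hwA : w ∣ A ^ x := ha ▸ (dvd_pow_self w (Nat.sub_ne_zero_of_lt hlt)).mul_left a
  have hAdeg : 0 < A.natDegree := natDegree_pos_of_dvd_pow hA hw hwA
  have hAunit : ¬IsUnit A := not_isUnit_of_natDegree_pos A hAdeg
  have hB : B ≠ 0 := fun h => hAunit (isCoprime_zero_right.mp (h ▸ hAB))
  have hC : C ≠ 0 := fun h => hAunit (isCoprime_zero_right.mp (h ▸ hAC))
  have hABC : (A * B * C).natDegree = A.natDegree + B.natDegree + C.natDegree := by
    rw [natDegree_mul (mul_ne_zero hA hB) hC, natDegree_mul hA hB]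
  have hAx : x * A.natDegree = a.natDegree + (min y z - x) * w.natDegree := by
    rw [← natDegree_pow, ← ha, natDegree_mul ha0 (pow_ne_zero _ hw0), natDegree_pow]
  obtain ⟨ha_lt, hb_lt, hc_lt⟩ := natDegree_lt_of_add_mul_pow_eq (by omega) hAB hAC (by omega)
    (Dvd.intro _ ha) hwA hsum
  rw [natDegree_mul (pow_ne_zero _ hw0) (pow_ne_zero _ hB), natDegree_pow, natDegree_pow] at hb_lt
  rw [natDegree_mul (pow_ne_zero _ hw0) (pow_ne_zero _ hC), natDegree_pow, natDegree_pow] at hc_lt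
  have hxw : (min y z - x) * w.natDegree < min y z * w.natDegree :=
    Nat.mul_lt_mul_of_pos_right (Nat.sub_lt (by omega) hx) hw
  refine ⟨?_, ?_, ?_⟩ <;> omega

theorem jesmanowicz_poly_noncoprime_bounds_x
    {K : Type*} [Field K] [CharZero K] [IsAlgClosed K]
    (f g w : K[X])
    (hf : 0 < f.natDegree) (hg : 0 < g.natDegree)
    (hfg : IsCoprime f g) (hw : 0 < w.natDegree)
    (x y z : ℕ) (hx : 0 < x) (hy : 0 < y) (hz : 0 < z)
    (heq : (w * (f ^ 2 - g ^ 2)) ^ x + (w * (2 * f * g)) ^ y = (w * (f ^ 2 + g ^ 2)) ^ z)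
    (hlt : x < min y z) :
    x * (f ^ 2 - g ^ 2).natDegree <
        (f ^ 2 - g ^ 2).natDegree + (2 * f * g).natDegree + (f ^ 2 + g ^ 2).natDegree +
          (min y z) * w.natDegree - 1 ∧
      y * (2 * f * g).natDegree ≤
        (f ^ 2 - g ^ 2).natDegree + (2 * f * g).natDegree + (f ^ 2 + g ^ 2).natDegree - 1 ∧
      z * (f ^ 2 + g ^ 2).natDegree ≤
        (f ^ 2 - g ^ 2).natDegree + (2 * f * g).natDegree + (f ^ 2 + g ^ 2).natDegree - 1 := by
  have h2 : IsUnit (2 : K[X]) := isUnit_C.mpr (IsUnit.mk0 (2 : K) two_ne_zero)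
  exact jesmanowicz_poly_noncoprime_bounds_x_general
    (sq_sub_sq_ne_zero_of_isCoprime (not_isUnit_of_natDegree_pos f hf) hfg)
    (isCoprime_sq_sub_sq_two_mul_mul h2 hfg) (isCoprime_sub_add h2 hfg.pow) hw hx heq hlt
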